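/- arXiv:2210.10939 — 2 statements merged into one kernel-verified Lean document; each statement's English description precedes it below -/
import Mathlib

section
/- Let F(x,t) = x² A_{n−2}(x) + 2x B_{n−1}(x) t + C_n(x) t² + O(t³) be a family of polynomials of the second kind, where the subscripts denote degrees, A_{n−2}(0)·(B_{n−1}(0)² − A_{n−2}(0)·C_n(0)) ≠ 0 and A_{n−2}(x) is square-free. Then ver(F) = 4 · (B_{n−1}(0)² − A_{n−2}(0)·C_n(0)) · A_{n−2}(0)². -/
open Finset Polynomial

noncomputable section

/-- The limit of a Hahn (Puiseux) series as `t → 0`: the coefficient of the lowest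
power of `t` occurring in it (its leading coefficient). -/
def lim0 {L : Type*} [Field L] (f : HahnSeries ℚ L) : L := f.coeff f.order

/-- `s` is a Puiseux series with nonnegative support and constant term `a`
(i.e. `s(0) = a`). -/
def HasConst {L : Type*} [Field L] (s : HahnSeries ℚ L) (a : L) : Prop :=
  s.coeff 0 = a ∧ ∀ q < (0 : ℚ), s.coeff q = 0

/-- The natural ring map `A[[t]] → L((t^ℚ))` induced by `φ : A →+* L`. -/
def Phi {A L : Type*} [CommRing A] [Field L] (φ : A →+* L) :
    PowerSeries A →+* HahnSeries ℚ L :=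
  (HahnSeries.ofPowerSeries ℚ L).comp (PowerSeries.map φ)

/-- The polynomial with power-series coefficients determined by a family
`F(x,t) = Σ_i p_i(x) t^i` of polynomials of degree at most `n'`. -/
def fam {A : Type*} [CommRing A] (n' : ℕ) (p : ℕ → Polynomial A) :
    Polynomial (PowerSeries A) :=
  ∑ j ∈ Finset.range (n' + 1), Polynomial.C (PowerSeries.mk fun i => (p i).coeff j) * X ^ j

/-- `∏_{q ≠ q'} (S q − S q')`, the product of the differences of all (ordered) pairs of
distinct `t`-roots.  For a monic family it equals `(-1)^(N(N-1)/2)` times the discriminant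
`Δ_{A[[t]]}(F) = ∏_{q<q'} (S q − S q')²`; in particular it is nonzero iff
`Δ_{A[[t]]}(F) ≠ 0`. -/
def rootsSep {L : Type*} [Field L] {ι : Type*} [Fintype ι] [DecidableEq ι]
    (S : ι → HahnSeries ℚ L) : HahnSeries ℚ L :=
  ∏ q ∈ Finset.univ.offDiag, (S q.1 - S q.2)

/-- `Δ(F, f_ν)(a ν ℓ, t)_0`: the limit of the generalized formal discriminant of the family
with respect to `f_ν = ∏_ℓ (x − a ν ℓ)`, evaluated at `x = a ν ℓ`.  Here the `t`-roots
approaching the roots of `f_ν` are grouped as `s ν · i` for `i` in `Fin (n ν)`; following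
Definition 2.3, `s'_i(x) = f_ν(x) − ∏_ℓ (x − s ν ℓ i)`, so that
`s'_i(x) − s'_j(x) = ∏_ℓ (x − s ν ℓ j) − ∏_ℓ (x − s ν ℓ i)`, and
`Δ(F,f_ν)(x,t) = [∏_{others} (x − s_ℓ)]^(2 n ν − 2) ∏_{i<j} (s'_i − s'_j)²`. -/
def gdlim {L : Type*} [Field L] {m : ℕ} (d n : Fin m → ℕ)
    (a : (ν : Fin m) → Fin (d ν) → L)
    (s : (ν : Fin m) → (ℓ : Fin (d ν)) → Fin (n ν) → HahnSeries ℚ L)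
    (ν : Fin m) (ℓ : Fin (d ν)) : L :=
  lim0 ((∏ ν' ∈ Finset.univ.erase ν, ∏ ℓ', ∏ i', (HahnSeries.C (a ν ℓ) - s ν' ℓ' i')) ^
      (2 * n ν - 2) *
    ∏ q ∈ Finset.univ.filter (fun q : Fin (n ν) × Fin (n ν) => q.1 < q.2),
      ((∏ ℓ', (HahnSeries.C (a ν ℓ) - s ν ℓ' q.2)) -
        ∏ ℓ', (HahnSeries.C (a ν ℓ) - s ν ℓ' q.1)) ^ 2)

/-- The discriminant `Δ(f) = ∏_{ℓ<ℓ'} (a ℓ − a ℓ')²` of a monic split polynomial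
`f = ∏_ℓ (x − a ℓ)`. -/
def discOf {L : Type*} [Field L] {d : ℕ} (a : Fin d → L) : L :=
  ∏ q ∈ Finset.univ.filter (fun q : Fin d × Fin d => q.1 < q.2), (a q.1 - a q.2) ^ 2

/-- The vertex `ver(F)` of the family (Definition 3.1), computed from the root data:
`ver(F) = ∏_{ν,ℓ} Δ(F,f_ν)(a_{νℓ},t)_0 · ∏_{ν<ν'} res(f_ν,f_{ν'})^(2(n_ν+n_{ν'}−n_ν n_{ν'}))`,
where `res(f_ν, f_{ν'}) = ∏_{ℓ,ℓ'} (a ν ℓ − a ν' ℓ')`. -/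
def ver {L : Type*} [Field L] {m : ℕ} (d n : Fin m → ℕ)
    (a : (ν : Fin m) → Fin (d ν) → L)
    (s : (ν : Fin m) → (ℓ : Fin (d ν)) → Fin (n ν) → HahnSeries ℚ L) : L :=
  (∏ ν, ∏ ℓ, gdlim d n a s ν ℓ) *
    ∏ ν, ∏ ν' ∈ Finset.Ioi ν,
      (∏ ℓ, ∏ ℓ', (a ν ℓ - a ν' ℓ')) ^
        (2 * ((n ν : ℤ) + (n ν' : ℤ) - (n ν : ℤ) * (n ν' : ℤ)))

/-!
Write `F = c (x - u)(x - v) R` with `R = ∏ᵢ (x - rᵢ)`, and let `P = R(0)`, `Q = R'(0)`,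
`F₀ = c u v P`, `F₁ = c (u v Q - (u + v) P)` be the low coefficients of `R` and `F` in `x`.
The identity `(c P)² · P² (u - v)² = (F₀ Q - F₁ P)² - 4 F₀ c P³` avoids dividing by `P`, and on its
right-hand side all lowest terms are known: `c → 1`, `P → A(0)`, `F₀ = C(0) t² + ⋯` and
`F₁ = 2 B(0) t + ⋯`, while `F₀ Q` has order at least two and does not contribute to the square.
Comparing the coefficients of `t²` gives the limit of `P² (u - v)²`, the only nontrivial
generalized discriminant.
-/

section InitialTerm

variable {Γ R : Type*}

/-- `s = a t^q + (terms of higher order)`. The coefficient `a` may vanish, so that the notion is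
stable under sums and products; `HasConst s a` is the case `q = 0`. -/
def HasInitialTerm [LinearOrder Γ] [Zero R] (s : HahnSeries Γ R) (q : Γ) (a : R) : Prop :=
  s.coeff q = a ∧ ∀ q' < q, s.coeff q' = 0

lemma hasInitialTerm_C [AddCommMonoid Γ] [LinearOrder Γ] [IsOrderedCancelAddMonoid Γ] [Semiring R]
    (a : R) : HasInitialTerm (HahnSeries.C a : HahnSeries Γ R) 0 a :=
  ⟨HahnSeries.coeff_single_same 0 a, fun _ hp => HahnSeries.coeff_single_of_ne hp.ne⟩

namespace HasInitialTerm

section Additive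

variable [LinearOrder Γ] {q q' : Γ}

lemma of_lt [Zero R] {s : HahnSeries Γ R} {a : R} (h : HasInitialTerm s q a) (hq : q' < q) :
    HasInitialTerm s q' 0 :=
  ⟨h.2 _ hq, fun p hp => h.2 p (hp.trans hq)⟩

lemma sub [AddGroup R] {s s' : HahnSeries Γ R} {a a' : R}
    (h : HasInitialTerm s q a) (h' : HasInitialTerm s' q a') :
    HasInitialTerm (s - s') q (a - a') :=
  ⟨by simp [h.1, h'.1], fun p hp => by simp [h.2 p hp, h'.2 p hp]⟩

lemma sum [AddCommMonoid R] {ι : Type*} {S : Finset ι} {s : ι → HahnSeries Γ R} {a : ι → R}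
    (h : ∀ i ∈ S, HasInitialTerm (s i) q (a i)) :
    HasInitialTerm (∑ i ∈ S, s i) q (∑ i ∈ S, a i) := by
  simp only [HasInitialTerm, HahnSeries.coeff_sum]
  exact ⟨sum_congr rfl fun i hi => (h i hi).1,
    fun p hp => sum_eq_zero fun i hi => (h i hi).2 p hp⟩

end Additive

section Multiplicative

variable [AddCommMonoid Γ] [LinearOrder Γ] [IsOrderedCancelAddMonoid Γ] {q q' : Γ}

lemma mul [NonUnitalNonAssocSemiring R] {s s' : HahnSeries Γ R} {a a' : R}
    (h : HasInitialTerm s q a) (h' : HasInitialTerm s' q' a') :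
    HasInitialTerm (s * s') (q + q') (a * a') := by
  have coeff_mul_coeff_eq_zero (i j : Γ) (hij : i < q ∨ j < q') : s.coeff i * s'.coeff j = 0 := by
    rcases hij with hi | hj
    · rw [h.2 i hi, zero_mul]
    · rw [h'.2 j hj, mul_zero]
  refine ⟨?_, fun p hp => ?_⟩
  · rw [HahnSeries.coeff_mul, sum_eq_single (q, q'), h.1, h'.1]
    · rintro ⟨i, j⟩ hij hne
      have hsum : i + j = q + q' := (mem_antidiagonal.1 hij).2.2
      refine coeff_mul_coeff_eq_zero i j (not_and_or.1 (fun hle => hne ?_) |>.imp lt_of_not_ge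
        lt_of_not_ge)
      obtain ⟨rfl, rfl⟩ := (add_eq_add_iff_eq_and_eq hle.1 hle.2).1 hsum.symm
      rfl
    · intro hmem
      by_contra hne
      exact hmem (mem_antidiagonal.2
        ⟨left_ne_zero_of_mul hne, right_ne_zero_of_mul hne, rfl⟩)
  · rw [HahnSeries.coeff_mul]
    refine sum_eq_zero fun ij hij => coeff_mul_coeff_eq_zero _ _ ?_
    exact lt_or_lt_of_add_lt_add ((mem_antidiagonal.1 hij).2.2.trans_lt hp)

lemma sq_mul_sq_mul_sub_sq [CommRing R] {c u v P Q : HahnSeries Γ R} {κ α β γ δ : R}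
    (hq : 0 < q) (hc : HasInitialTerm c 0 κ) (hP : HasInitialTerm P 0 α)
    (hQ : HasInitialTerm Q 0 δ) (h₀ : HasInitialTerm (c * (u * v * P)) (q + q) γ)
    (h₁ : HasInitialTerm (c * (u * v * Q - (u + v) * P)) q β) :
    HasInitialTerm ((c * P) ^ 2 * (P ^ 2 * (u - v) ^ 2)) (q + q)
      (α ^ 2 * (β ^ 2 - 4 * κ * α * γ)) := by
  set F₀ := c * (u * v * P) with hF₀
  set F₁ := c * (u * v * Q - (u + v) * P) with hF₁
  have hF₀Q : HasInitialTerm (F₀ * Q) q 0 := (h₀.mul hQ).of_lt (by simpa using hq)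
  have hF₁P : HasInitialTerm (F₁ * P) q (β * α) := by simpa using h₁.mul hP
  have hroot : HasInitialTerm (F₀ * Q - F₁ * P) q (0 - β * α) := hF₀Q.sub hF₁P
  have hprod : HasInitialTerm (HahnSeries.C 4 * (F₀ * (c * (P * (P * P))))) (q + q)
      (4 * (γ * (κ * (α * (α * α))))) := by
    simpa using (hasInitialTerm_C 4).mul (h₀.mul (hc.mul (hP.mul (hP.mul hP))))
  have hseries : (c * P) ^ 2 * (P ^ 2 * (u - v) ^ 2) =
      (F₀ * Q - F₁ * P) * (F₀ * Q - F₁ * P) - HahnSeries.C 4 * (F₀ * (c * (P * (P * P)))) := by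
    rw [map_ofNat, hF₀, hF₁]; ring
  have hcoeff : α ^ 2 * (β ^ 2 - 4 * κ * α * γ) =
      (0 - β * α) * (0 - β * α) - 4 * (γ * (κ * (α * (α * α)))) := by ring
  rw [hseries, hcoeff]
  exact (hroot.mul hroot).sub hprod

end Multiplicative

end HasInitialTerm

end InitialTerm

section Specialization

variable {Γ R : Type*} [AddCommMonoid Γ] [LinearOrder Γ] [IsOrderedCancelAddMonoid Γ]

/-- `f(x, t)` involves no negative powers of `t`, and `f(x, 0) = g(x)`. Stability under products
turns the constant terms of the `t`-roots into the limits of all coefficients of `f`. -/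
def SpecializesTo [Semiring R] (f : (HahnSeries Γ R)[X]) (g : R[X]) : Prop :=
  ∀ k, HasInitialTerm (f.coeff k) 0 (g.coeff k)

namespace SpecializesTo

lemma map_C [Semiring R] (g : R[X]) :
    SpecializesTo (g.map (HahnSeries.C : R →+* HahnSeries Γ R)) g := fun k => by
  simpa only [coeff_map] using hasInitialTerm_C (g.coeff k)

lemma mul [Semiring R] {f f' : (HahnSeries Γ R)[X]} {g g' : R[X]}
    (h : SpecializesTo f g) (h' : SpecializesTo f' g') : SpecializesTo (f * f') (g * g') :=
  fun k => by
    simp only [coeff_mul]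
    exact HasInitialTerm.sum fun ij _ => by simpa only [add_zero] using (h ij.1).mul (h' ij.2)

lemma X_sub_C [Ring R] {s : HahnSeries Γ R} {a : R} (h : HasInitialTerm s 0 a) :
    SpecializesTo (X - C s) (X - C a) := fun k => by
  have hX : SpecializesTo (X : (HahnSeries Γ R)[X]) X := by simpa only [map_X] using map_C X
  have hC : HasInitialTerm ((C s).coeff k) 0 ((C a).coeff k) := by
    obtain rfl | hk := eq_or_ne k 0
    · simpa only [coeff_C_zero] using h
    · simpa only [coeff_C_of_ne_zero hk, map_zero] using hasInitialTerm_C (Γ := Γ) (0 : R)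
  simpa only [coeff_sub] using (hX k).sub hC

lemma prod_X_sub_C [CommRing R] {ι : Type*} (S : Finset ι) {s : ι → HahnSeries Γ R} {a : ι → R}
    (h : ∀ i, HasInitialTerm (s i) 0 (a i)) :
    SpecializesTo (∏ i ∈ S, (X - C (s i))) (∏ i ∈ S, (X - C (a i))) :=
  prod_hom_rel (by simpa only [Polynomial.map_one] using map_C (Γ := Γ) (1 : R[X]))
    fun i _ _ ih => (X_sub_C (h i)).mul ih

end SpecializesTo

end Specialization

section Coefficients

variable {R : Type*} [CommRing R] (u v : R)

lemma coeff_zero_X_sub_C_mul_X_sub_C_mul (f : R[X]) :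
    ((X - C u) * (X - C v) * f).coeff 0 = u * v * f.coeff 0 := by
  simp

lemma coeff_one_X_sub_C_mul_X_sub_C_mul (f : R[X]) :
    ((X - C u) * (X - C v) * f).coeff 1 = u * v * f.coeff 1 - (u + v) * f.coeff 0 := by
  simp only [mul_coeff_one, mul_coeff_zero, coeff_sub, coeff_X_zero, coeff_X_one, coeff_C_zero,
    coeff_C_succ]
  ring

lemma coeff_zero_prod_X_sub_C {ι : Type*} (S : Finset ι) (r : ι → R) :
    (∏ i ∈ S, (X - C (r i))).coeff 0 = ∏ i ∈ S, (0 - r i) := by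
  simp [coeff_zero_prod]

lemma coeff_card_prod_X_sub_C [Nontrivial R] {ι : Type*} (S : Finset ι) (r : ι → R) :
    (∏ i ∈ S, (X - C (r i))).coeff #S = 1 := by
  simpa only [natDegree_finsetProd_X_sub_C_eq_card] using (monic_prod_X_sub_C r S).coeff_natDegree

lemma coeff_card_add_two_X_sub_C_mul_X_sub_C_mul_prod [Nontrivial R] {ι : Type*} (S : Finset ι)
    (r : ι → R) : ((X - C u) * (X - C v) * ∏ i ∈ S, (X - C (r i))).coeff (#S + 2) = 1 := by
  have hmonic := monic_prod_X_sub_C r S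
  have hquad : ((X - C u) * (X - C v)).Monic := (monic_X_sub_C u).mul (monic_X_sub_C v)
  have hdeg : ((X - C u) * (X - C v) * ∏ i ∈ S, (X - C (r i))).natDegree = #S + 2 := by
    rw [hquad.natDegree_mul hmonic, (monic_X_sub_C u).natDegree_mul (monic_X_sub_C v),
      natDegree_X_sub_C, natDegree_X_sub_C, natDegree_finsetProd_X_sub_C_eq_card, add_comm]
  simpa only [hdeg] using (hquad.mul hmonic).coeff_natDegree

end Coefficients

section Family

variable {A : Type*} [CommRing A]

lemma coeff_coeff_fam {N i : ℕ} {p : ℕ → A[X]} (hdeg : (p i).natDegree ≤ N) (j : ℕ) :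
    PowerSeries.coeff i ((fam N p).coeff j) = (p i).coeff j := by
  have hfam : (fam N p).coeff j =
      if j ≤ N then PowerSeries.mk fun i => (p i).coeff j else 0 := by
    simp [fam, coeff_X_pow]
  obtain hj | hj := le_or_gt j N
  · rw [hfam, if_pos hj, PowerSeries.coeff_mk]
  · rw [hfam, if_neg hj.not_ge, map_zero, coeff_eq_zero_of_natDegree_lt (hdeg.trans_lt hj)]

lemma hasInitialTerm_Phi {L : Type*} [Field L] (φ : A →+* L) {f : PowerSeries A} {n : ℕ}
    (hf : ∀ m < n, PowerSeries.coeff m f = 0) :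
    HasInitialTerm (Phi φ f) n (φ (PowerSeries.coeff n f)) := by
  have coeff_natCast (m : ℕ) : (Phi φ f).coeff m = φ (PowerSeries.coeff m f) := by
    rw [Phi, RingHom.comp_apply, HahnSeries.ofPowerSeries_apply_coeff, PowerSeries.coeff_map]
  refine ⟨coeff_natCast n, fun q hq => ?_⟩
  by_cases h : ∃ m : ℕ, (m : ℚ) = q
  · obtain ⟨m, rfl⟩ := h
    rw [coeff_natCast, hf m (by exact_mod_cast hq), map_zero]
  · rw [Phi, RingHom.comp_apply, HahnSeries.ofPowerSeries_apply]
    exact HahnSeries.embDomain_of_notMem_range h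

end Family

section Limit

variable {L : Type*} [Field L]

lemma HasInitialTerm.lim0_eq {s : HahnSeries ℚ L} {q : ℚ} {a : L} (h : HasInitialTerm s q a)
    (ha : a ≠ 0) : lim0 s = a := by
  have hcoeff : s.coeff q ≠ 0 := by rwa [h.1]
  have hs : s ≠ 0 := by rintro rfl; exact hcoeff rfl
  have horder : s.order = q := (HahnSeries.order_le_of_coeff_ne_zero hcoeff).antisymm
    ((HahnSeries.le_order_iff_forall hs).2 h.2)
  rw [lim0, horder, h.1]

lemma lim0_mul (s s' : HahnSeries ℚ L) : lim0 (s * s') = lim0 s * lim0 s' := by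
  simp only [lim0, ← HahnSeries.leadingCoeff_eq, HahnSeries.leadingCoeff_mul]

lemma lim0_one : lim0 (1 : HahnSeries ℚ L) = 1 := by
  simpa only [map_one] using (hasInitialTerm_C (1 : L)).lim0_eq one_ne_zero

lemma lim0_sq_mul_sub_sq {c u v P Q : HahnSeries ℚ L} {q : ℚ} {κ α β γ δ : L}
    (hq : 0 < q) (hκ : κ ≠ 0) (hα : α ≠ 0) (hdisc : β ^ 2 - 4 * κ * α * γ ≠ 0)
    (hc : HasInitialTerm c 0 κ) (hP : HasInitialTerm P 0 α)
    (hQ : HasInitialTerm Q 0 δ) (h₀ : HasInitialTerm (c * (u * v * P)) (q + q) γ)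
    (h₁ : HasInitialTerm (c * (u * v * Q - (u + v) * P)) q β) :
    lim0 (P ^ 2 * (u - v) ^ 2) = (β ^ 2 - 4 * κ * α * γ) / κ ^ 2 := by
  have hscaled : lim0 ((c * P) ^ 2 * (P ^ 2 * (u - v) ^ 2)) = α ^ 2 * (β ^ 2 - 4 * κ * α * γ) :=
    (HasInitialTerm.sq_mul_sq_mul_sub_sq hq hc hP hQ h₀ h₁).lim0_eq
      (mul_ne_zero (pow_ne_zero 2 hα) hdisc)
  rw [lim0_mul, sq (c * P), lim0_mul, lim0_mul, hc.lim0_eq hκ, hP.lim0_eq hα] at hscaled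
  field_simp
  apply mul_left_cancel₀ (pow_ne_zero 2 hα)
  linear_combination hscaled

end Limit

section SecondKind

variable {A L ι : Type*} [CommRing A] [Field L] [Fintype ι] {φ : A →+* L}
  {Aq Bq Cq : A[X]} {F : (PowerSeries A)[X]} {a : ι → L} {u v c : HahnSeries ℚ L}
  {r : ι → HahnSeries ℚ L}

lemma hasInitialTerm_coeff_zero_of_secondKind
    (hF₀ : ∀ j, PowerSeries.coeff 0 (F.coeff j) = (X ^ 2 * Aq).coeff j)
    (hF₁ : ∀ j, PowerSeries.coeff 1 (F.coeff j) = (2 * X * Bq).coeff j)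
    (hF₂ : ∀ j, PowerSeries.coeff 2 (F.coeff j) = Cq.coeff j) :
    HasInitialTerm ((F.map (Phi φ)).coeff 0) 2 (φ (Cq.eval 0)) := by
  rw [coeff_map, ← coeff_zero_eq_eval_zero, ← hF₂ 0]
  refine hasInitialTerm_Phi φ fun m hm => ?_
  interval_cases m
  · simp [hF₀]
  · simp [hF₁]

lemma hasInitialTerm_coeff_one_of_secondKind
    (hF₀ : ∀ j, PowerSeries.coeff 0 (F.coeff j) = (X ^ 2 * Aq).coeff j)
    (hF₁ : ∀ j, PowerSeries.coeff 1 (F.coeff j) = (2 * X * Bq).coeff j) :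
    HasInitialTerm ((F.map (Phi φ)).coeff 1) 1 (2 * φ (Bq.eval 0)) := by
  have hcoeff : (2 * X * Bq).coeff 1 = 2 * Bq.eval 0 := by
    rw [mul_right_comm, coeff_mul_X, mul_coeff_zero, coeff_ofNat_zero, coeff_zero_eq_eval_zero]
  rw [coeff_map, ← map_ofNat φ, ← map_mul, ← hcoeff, ← hF₁ 1]
  refine mod_cast hasInitialTerm_Phi φ fun m hm => ?_
  interval_cases m
  simp [hF₀, coeff_X_pow_mul']

lemma hasInitialTerm_leadingFactor_of_secondKind
    (hF₀ : ∀ j, PowerSeries.coeff 0 (F.coeff j) = (X ^ 2 * Aq).coeff j)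
    (hAfac : Aq.map φ = ∏ i, (X - C (a i)))
    (hsplit : F.map (Phi φ) = C c * ((X - C u) * (X - C v) * ∏ i, (X - C (r i)))) :
    HasInitialTerm c 0 1 := by
  have hc : c = Phi φ (F.coeff (Fintype.card ι + 2)) := by
    rw [← coeff_map, hsplit, coeff_C_mul, ← card_univ,
      coeff_card_add_two_X_sub_C_mul_X_sub_C_mul_prod, mul_one]
  have hone : φ (PowerSeries.coeff 0 (F.coeff (Fintype.card ι + 2))) = 1 := by
    rw [hF₀, coeff_X_pow_mul, ← coeff_map, hAfac, ← card_univ, coeff_card_prod_X_sub_C]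
  rw [hc, ← hone]
  exact mod_cast hasInitialTerm_Phi φ fun m hm => absurd hm m.not_lt_zero

lemma prod_zero_sub_eq_map_eval_zero (hAfac : Aq.map φ = ∏ i, (X - C (a i))) :
    ∏ i, (0 - a i) = φ (Aq.eval 0) := by
  rw [← coeff_zero_prod_X_sub_C, ← hAfac, coeff_map, coeff_zero_eq_eval_zero]

lemma lim0_prod_sq_mul_sub_sq_of_secondKind [NeZero (2 : L)]
    (hABC : φ (Aq.eval 0 * (Bq.eval 0 ^ 2 - Aq.eval 0 * Cq.eval 0)) ≠ 0)
    (hF₀ : ∀ j, PowerSeries.coeff 0 (F.coeff j) = (X ^ 2 * Aq).coeff j)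
    (hF₁ : ∀ j, PowerSeries.coeff 1 (F.coeff j) = (2 * X * Bq).coeff j)
    (hF₂ : ∀ j, PowerSeries.coeff 2 (F.coeff j) = Cq.coeff j)
    (hAfac : Aq.map φ = ∏ i, (X - C (a i))) (hr : ∀ i, HasConst (r i) (a i))
    (hsplit : F.map (Phi φ) = C c * ((X - C u) * (X - C v) * ∏ i, (X - C (r i)))) :
    lim0 ((∏ i, (0 - r i)) ^ 2 * (u - v) ^ 2) =
      4 * (φ (Bq.eval 0) ^ 2 - φ (Aq.eval 0) * φ (Cq.eval 0)) := by
  have hc := hasInitialTerm_leadingFactor_of_secondKind hF₀ hAfac hsplit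
  have hR := SpecializesTo.prod_X_sub_C univ hr
  have hP : HasInitialTerm (∏ i, (0 - r i)) 0 (φ (Aq.eval 0)) := by
    simpa only [coeff_zero_prod_X_sub_C, prod_zero_sub_eq_map_eval_zero hAfac] using hR 0
  have h₀ := hasInitialTerm_coeff_zero_of_secondKind (φ := φ) hF₀ hF₁ hF₂
  have h₁ := hasInitialTerm_coeff_one_of_secondKind (φ := φ) hF₀ hF₁
  rw [hsplit, coeff_C_mul, coeff_zero_X_sub_C_mul_X_sub_C_mul, coeff_zero_prod_X_sub_C,
    ← one_add_one_eq_two] at h₀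
  rw [hsplit, coeff_C_mul, coeff_one_X_sub_C_mul_X_sub_C_mul, coeff_zero_prod_X_sub_C] at h₁
  simp only [map_mul, map_sub, map_pow, mul_ne_zero_iff] at hABC
  have hdisc : (2 * φ (Bq.eval 0)) ^ 2 - 4 * 1 * φ (Aq.eval 0) * φ (Cq.eval 0) =
      4 * (φ (Bq.eval 0) ^ 2 - φ (Aq.eval 0) * φ (Cq.eval 0)) := by ring
  have hfour : (4 : L) ≠ 0 := by
    simpa only [show (2 : L) ^ 2 = 4 by norm_num] using pow_ne_zero 2 (two_ne_zero (α := L))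
  rw [lim0_sq_mul_sub_sq one_pos one_ne_zero hABC.1 (hdisc ▸ mul_ne_zero hfour hABC.2)
    hc hP (hR 1) h₀ h₁, hdisc, one_pow, div_one]

end SecondKind

theorem stmt5_general {A L ι : Type*} [CommRing A] [Field L] [NeZero (2 : L)] [Fintype ι]
    (φ : A →+* L) (Aq Bq Cq : A[X])
    (hABC : φ (Aq.eval 0 * (Bq.eval 0 ^ 2 - Aq.eval 0 * Cq.eval 0)) ≠ 0)
    (F : (PowerSeries A)[X])
    (hF₀ : ∀ j, PowerSeries.coeff 0 (F.coeff j) = (X ^ 2 * Aq).coeff j)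
    (hF₁ : ∀ j, PowerSeries.coeff 1 (F.coeff j) = (2 * X * Bq).coeff j)
    (hF₂ : ∀ j, PowerSeries.coeff 2 (F.coeff j) = Cq.coeff j)
    (a : ι → L) (hAfac : Aq.map φ = ∏ i, (X - C (a i)))
    (u v : HahnSeries ℚ L) (r : ι → HahnSeries ℚ L) (hr : ∀ i, HasConst (r i) (a i))
    (c : HahnSeries ℚ L)
    (hsplit : F.map (Phi φ) = C c * ((X - C u) * (X - C v) * ∏ i, (X - C (r i)))) :
    lim0 ((∏ i, (HahnSeries.C (0 : L) - r i)) ^ (2 * 2 - 2) * (u - v) ^ 2) *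
        (∏ i, lim0 (((HahnSeries.C (a i) - u) * (HahnSeries.C (a i) - v)) ^ (2 * 1 - 2))) *
        (∏ i, ((0 : L) - a i)) ^ (2 * ((2 : ℤ) + 1 - 2 * 1)) =
      4 * (φ (Bq.eval 0) ^ 2 - φ (Aq.eval 0) * φ (Cq.eval 0)) * φ (Aq.eval 0) ^ 2 := by
  have hdouble : lim0 ((∏ i, (HahnSeries.C (0 : L) - r i)) ^ (2 * 2 - 2) * (u - v) ^ 2) =
      4 * (φ (Bq.eval 0) ^ 2 - φ (Aq.eval 0) * φ (Cq.eval 0)) := by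
    rw [map_zero]
    exact lim0_prod_sq_mul_sub_sq_of_secondKind hABC hF₀ hF₁ hF₂ hAfac hr hsplit
  have hsimple (i : ι) :
      lim0 (((HahnSeries.C (a i) - u) * (HahnSeries.C (a i) - v)) ^ (2 * 1 - 2)) = 1 := lim0_one
  have hres : (∏ i, (0 - a i)) ^ (2 * ((2 : ℤ) + 1 - 2 * 1)) = φ (Aq.eval 0) ^ 2 := by
    rw [prod_zero_sub_eq_map_eval_zero hAfac]
    exact zpow_natCast _ 2
  rw [hdouble, prod_congr rfl fun i _ => hsimple i, prod_const_one, mul_one, hres]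

/-- **Proposition 3.3** (families of the second kind).  Let
`F(x,t) = x² A_{n−2}(x) + 2x B_{n−1}(x) t + C_n(x) t² + O(t³)` with
`A_{n−2}(0)·(B_{n−1}(0)² − A_{n−2}(0) C_n(0)) ≠ 0` and `A_{n−2}` square-free.  Then
`ver(F) = 4 (B_{n−1}(0)² − A_{n−2}(0) C_n(0)) A_{n−2}(0)²`.
Here `F_0 = x² A_{n−2}` has the factors `f_1 = x` (multiplicity `2`, `t`-roots `u, v`)
and `f_2 = A_{n−2} = ∏ᵢ (x − aA i)` (multiplicity `1`, `t`-roots `r i`), and `ver(F)`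
is written out according to Definition 3.1. -/
theorem stmt5 {A L : Type*} [CommRing A] [IsDomain A]
    [Field L] [IsAlgClosed L] [CharZero L]
    (φ : A →+* L) (hφ : Function.Injective φ)
    (N : ℕ) (hN : 2 ≤ N)
    (Aq Bq Cq : Polynomial A) (hAmonic : Aq.Monic) (hAdeg : Aq.natDegree = N - 2)
    (hBdeg : Bq.natDegree ≤ N - 1) (hCdeg : Cq.natDegree ≤ N) (hsqfree : Squarefree Aq)
    (hABC : Aq.eval 0 * (Bq.eval 0 ^ 2 - Aq.eval 0 * Cq.eval 0) ≠ 0)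
    (p : ℕ → Polynomial A) (hdeg : ∀ i, (p i).natDegree ≤ N)
    (hp0 : p 0 = X ^ 2 * Aq) (hp1 : p 1 = 2 * X * Bq) (hp2 : p 2 = Cq)
    (aA : Fin (N - 2) → L) (haInj : Function.Injective aA) (haNe : ∀ i, aA i ≠ 0)
    (hAfac : Aq.map φ = ∏ i, (X - C (aA i)))
    (u v : HahnSeries ℚ L) (hu : HasConst u 0) (hv : HasConst v 0)
    (r : Fin (N - 2) → HahnSeries ℚ L) (hr : ∀ i, HasConst (r i) (aA i))
    (c : HahnSeries ℚ L)
    (hsplit : (fam N p).map (Phi φ) =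
      C c * ((X - C u) * (X - C v) * ∏ i, (X - C (r i)))) :
    lim0 ((∏ i, (HahnSeries.C (0 : L) - r i)) ^ (2 * 2 - 2) * (u - v) ^ 2) *
        (∏ i, lim0 (((HahnSeries.C (aA i) - u) * (HahnSeries.C (aA i) - v)) ^
          (2 * 1 - 2))) *
        (∏ i, ((0 : L) - aA i)) ^ (2 * ((2 : ℤ) + 1 - 2 * 1)) =
      4 * (φ (Bq.eval 0) ^ 2 - φ (Aq.eval 0) * φ (Cq.eval 0)) * φ (Aq.eval 0) ^ 2 :=
  stmt5_general φ Aq Bq Cq ((map_ne_zero_iff φ hφ).2 hABC) (fam N p)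
    (hp0 ▸ coeff_coeff_fam (hdeg 0)) (hp1 ▸ coeff_coeff_fam (hdeg 1))
    (hp2 ▸ coeff_coeff_fam (hdeg 2)) aA hAfac u v r hr c hsplit
end
end

section
/- Let F(x,t) = a_0 x² + a_1 x³ + 2 b_0 x t + b_1 x² t + c_0 t² + c_1 x t² + d_1 t³ + O(t⁴) be a family of polynomials of the third kind, with b_0² − a_0 c_0 = 0, a_0·(−a_1 b_0³ + b_1 b_0² a_0 − c_1 b_0 a_0² + d_1 a_0³) ≠ 0 and Δ_{A[[t]]}(F) ≠ 0. Then the type of F with respect to the factor f = x of F_0 = x²(a_0 + a_1 x) is τ = 3; more precisely, the two t-roots of F with constant term 0 have the form s_{1,2} = α t + α_{1,2} t^{3/2} + ⋯ with α = −b_0/a_0 and α_1 ≠ α_2, so m = 3/2 and τ = ⌊2·(3/2)⌋ = 3. -/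
open Finset Polynomial

noncomputable section

/-!
Put `α = -b₀/a₀`. Along the line `x = αt` the terms of `F` of total degree `2` form
`a₀(x - αt)²`, so there `∂F/∂x` vanishes to order at least `2` in `t`, and `F` to order exactly
`3`, the coefficient of `t³` being `(-a₁b₀³ + b₁b₀²a₀ - c₁b₀a₀² + d₁a₀³) / a₀³`. Since
`F(x, t) = Q(x)(x - u)(x - v)` with `Q(αt)` a unit, the differences `αt - u` and `αt - v` have
product of order `3` and sum of order at least `2`. Hence both have order `3/2` with opposite
leading coefficients, and these do not cancel in `u - v`.
-/

section HahnSeriesOrder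

variable {Γ R : Type*} [AddCommMonoid Γ] [LinearOrder Γ] [IsOrderedCancelAddMonoid Γ] {q : Γ}

section Ring

variable [Ring R] [NoZeroDivisors R]

lemma orderTop_eq_of_orderTop_mul_eq_of_lt_orderTop_add {x y : HahnSeries Γ R}
    (hmul : (x * y).orderTop = ↑(q + q)) (hadd : (q : WithTop Γ) < (x + y).orderTop) :
    x.orderTop = q := by
  rw [HahnSeries.orderTop_mul] at hmul
  obtain ⟨a, b, hx, hy, hab⟩ := WithTop.add_eq_coe.1 hmul
  rw [← hx, WithTop.coe_inj]
  rcases lt_trichotomy a b with hlt | rfl | hgt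
  · have hqa : q < a := by
      rwa [HahnSeries.orderTop_add_eq_left (by rwa [← hx, ← hy, WithTop.coe_lt_coe]), ← hx,
        WithTop.coe_lt_coe] at hadd
    exact absurd hab (add_lt_add hqa (hqa.trans hlt)).ne'
  · rcases lt_trichotomy a q with haq | haq | haq
    · exact absurd hab (add_lt_add haq haq).ne
    · exact haq
    · exact absurd hab (add_lt_add haq haq).ne'
  · have hqb : q < b := by
      rwa [HahnSeries.orderTop_add_eq_right (by rwa [← hx, ← hy, WithTop.coe_lt_coe]), ← hy,
        WithTop.coe_lt_coe] at hadd
    exact absurd hab (add_lt_add (hqb.trans hgt) hqb).ne'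

lemma orderTop_sub_eq_of_lt_orderTop_add (h2 : (2 : R) ≠ 0) {x y : HahnSeries Γ R}
    (hy : y.orderTop = q) (hadd : (q : WithTop Γ) < (x + y).orderTop) : (x - y).orderTop = q := by
  have htwo : (HahnSeries.C (2 : R) * y).orderTop = (q : WithTop Γ) := by
    rw [HahnSeries.orderTop_mul, HahnSeries.C_apply, HahnSeries.orderTop_single h2, hy,
      WithTop.coe_zero, zero_add]
  have hsub : x - y = (x + y) - HahnSeries.C (2 : R) * y := by
    rw [map_ofNat, two_mul, add_sub_add_right_eq_sub]
  rw [hsub, ← HahnSeries.orderTop_neg, neg_sub, HahnSeries.orderTop_sub (by rwa [htwo]), htwo]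

end Ring

variable [CommRing R] [NoZeroDivisors R] {Q : Polynomial (HahnSeries Γ R)} {s u v : HahnSeries Γ R}

lemma orderTop_sub_mul_sub_eq_of_orderTop_eval_eq {r : WithTop Γ} (hQ : (Q.eval s).orderTop = 0)
    (heval : ((Q * ((X - C u) * (X - C v))).eval s).orderTop = r) :
    ((s - u) * (s - v)).orderTop = r := by
  simpa [hQ] using heval

lemma lt_orderTop_sub_add_sub_of_lt_orderTop_derivative (hq : 0 < q)
    (hQ : (Q.eval s).orderTop = 0) (hQ' : 0 ≤ (Q.derivative.eval s).orderTop)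
    (hmul : ((s - u) * (s - v)).orderTop = ↑(q + q))
    (hderiv : (q : WithTop Γ) <
      ((Q * ((X - C u) * (X - C v))).derivative.eval s).orderTop) :
    (q : WithTop Γ) < ((s - u) + (s - v)).orderTop := by
  have hsum : Q.eval s * ((s - u) + (s - v)) =
      (Q * ((X - C u) * (X - C v))).derivative.eval s -
        Q.derivative.eval s * ((s - u) * (s - v)) := by
    simp only [derivative_mul, derivative_sub, derivative_X, derivative_C, eval_add, eval_mul,
      eval_sub, eval_X, eval_C, eval_one, eval_zero]
    ring
  have hcorr : (q : WithTop Γ) < (Q.derivative.eval s * ((s - u) * (s - v))).orderTop := by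
    rw [HahnSeries.orderTop_mul, hmul]
    exact (WithTop.coe_lt_coe.2 (lt_add_of_pos_left q hq)).trans_le (le_add_of_nonneg_left hQ')
  calc (q : WithTop Γ) < (Q.eval s * ((s - u) + (s - v))).orderTop := by
        rw [hsum]
        exact (lt_min hderiv hcorr).trans_le HahnSeries.min_orderTop_le_orderTop_sub
    _ = ((s - u) + (s - v)).orderTop := by rw [HahnSeries.orderTop_mul, hQ, zero_add]

/- In the variable `y = x - s` the Newton polygon has an edge from `(0, 2q)` to `(2, 0)` without a
term at its midpoint `(1, q)`, so the two roots of order `q` have opposite leading coefficients. -/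
theorem orderTop_roots_of_orderTop_eval_eq (h2 : (2 : R) ≠ 0) (hq : 0 < q)
    (hQ : (Q.eval s).orderTop = 0) (hQ' : 0 ≤ (Q.derivative.eval s).orderTop)
    (heval : ((Q * ((X - C u) * (X - C v))).eval s).orderTop = ↑(q + q))
    (hderiv : (q : WithTop Γ) <
      ((Q * ((X - C u) * (X - C v))).derivative.eval s).orderTop) :
    (s - u).orderTop = q ∧ (s - v).orderTop = q ∧ (u - v).orderTop = q := by
  have hmul := orderTop_sub_mul_sub_eq_of_orderTop_eval_eq hQ heval
  have hadd := lt_orderTop_sub_add_sub_of_lt_orderTop_derivative hq hQ hQ' hmul hderiv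
  have hu := orderTop_eq_of_orderTop_mul_eq_of_lt_orderTop_add hmul hadd
  rw [mul_comm] at hmul
  rw [add_comm] at hadd
  refine ⟨hu, orderTop_eq_of_orderTop_mul_eq_of_lt_orderTop_add hmul hadd, ?_⟩
  rw [← orderTop_sub_eq_of_lt_orderTop_add h2 hu hadd, sub_sub_sub_cancel_left]

end HahnSeriesOrder

lemma coeff_eq_of_lt_orderTop_sub {Γ R : Type*} [PartialOrder Γ] [AddGroup R]
    {x y : HahnSeries Γ R} {g : Γ} (h : (g : WithTop Γ) < (x - y).orderTop) :
    x.coeff g = y.coeff g := by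
  rw [← sub_eq_zero, ← HahnSeries.coeff_sub, HahnSeries.coeff_eq_zero_of_lt_orderTop h]

lemma order_eq_of_orderTop_eq {Γ R : Type*} [PartialOrder Γ] [Zero Γ] [Zero R]
    {x : HahnSeries Γ R} {g : Γ} (h : x.orderTop = g) : x.order = g := by
  have hx : x ≠ 0 := HahnSeries.orderTop_ne_top.1 (h ▸ WithTop.coe_ne_top)
  rwa [← WithTop.coe_inj, HahnSeries.order_eq_orderTop_of_ne_zero hx]

section OfPowerSeries

variable {Γ R : Type*} [Semiring Γ] [LinearOrder Γ] [IsStrictOrderedRing Γ] [Semiring R]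
  {f : PowerSeries R} {n : ℕ}

lemma natCast_le_orderTop_ofPowerSeries (hf : ∀ m < n, PowerSeries.coeff m f = 0) :
    ((n : Γ) : WithTop Γ) ≤ (HahnSeries.ofPowerSeries Γ R f).orderTop := by
  have hn : (n : WithTop ℕ) ≤ (HahnSeries.toPowerSeries.symm f).orderTop :=
    HahnSeries.le_orderTop_iff_forall.2 fun m hm ↦ hf m (WithTop.coe_lt_coe.1 hm)
  rw [HahnSeries.ofPowerSeries_apply, HahnSeries.orderTop_embDomain]
  exact Nat.castOrderEmbedding.monotone.withTop_map hn

lemma orderTop_ofPowerSeries_eq_natCast (hf : ∀ m < n, PowerSeries.coeff m f = 0)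
    (hn : PowerSeries.coeff n f ≠ 0) :
    (HahnSeries.ofPowerSeries Γ R f).orderTop = ((n : Γ) : WithTop Γ) :=
  (HahnSeries.orderTop_le_of_coeff_ne_zero
    (by rwa [HahnSeries.ofPowerSeries_apply_coeff])).antisymm
      (natCast_le_orderTop_ofPowerSeries hf)

end OfPowerSeries

section Families

variable {A L : Type*} [CommRing A] [Field L] (φ : A →+* L) {N : ℕ} {p : ℕ → Polynomial A}

lemma coeff_fam (hdeg : ∀ i, (p i).natDegree ≤ N) (j : ℕ) :
    (fam N p).coeff j = PowerSeries.mk fun i ↦ (p i).coeff j := by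
  simp only [fam, finsetSum_coeff, coeff_C_mul, coeff_X_pow, mul_ite, mul_one, mul_zero,
    Finset.sum_ite_eq, Finset.mem_range]
  split_ifs with hj
  · rfl
  · ext i
    simp [coeff_eq_zero_of_natDegree_lt ((hdeg i).trans_lt (by lia : N < j))]

lemma natDegree_derivative_le_of_natDegree_le {f : Polynomial A} (hf : f.natDegree ≤ N) :
    (derivative f).natDegree ≤ N :=
  (natDegree_derivative_le f).trans ((Nat.sub_le _ _).trans hf)

lemma derivative_fam (hdeg : ∀ i, (p i).natDegree ≤ N) :
    derivative (fam N p) = fam N fun i ↦ derivative (p i) := by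
  have hdeg' (i : ℕ) := natDegree_derivative_le_of_natDegree_le (hdeg i)
  ext j i
  rw [coeff_derivative, coeff_fam hdeg, coeff_fam hdeg', PowerSeries.coeff_mk, coeff_derivative,
    ← Nat.cast_succ, ← Nat.cast_succ, ← map_natCast (PowerSeries.C (R := A)),
    PowerSeries.coeff_mul_C, PowerSeries.coeff_mk]

lemma eval_map_Phi (F : Polynomial (PowerSeries A)) (α : L) :
    (F.map (Phi φ)).eval (HahnSeries.single 1 α) = HahnSeries.ofPowerSeries ℚ L
      (F.eval₂ (PowerSeries.map φ) (PowerSeries.C α * PowerSeries.X)) := by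
  rw [hom_eval₂, eval_map, Phi]
  congr 1
  simp [HahnSeries.C_apply]

lemma natDegree_fam_le (hdeg : ∀ i, (p i).natDegree ≤ N) : (fam N p).natDegree ≤ N := by
  refine natDegree_le_iff_coeff_eq_zero.2 fun j hj ↦ ?_
  ext i
  rw [coeff_fam hdeg, PowerSeries.coeff_mk,
    coeff_eq_zero_of_natDegree_lt ((hdeg i).trans_lt hj), map_zero]

lemma coeff_eval₂_fam (hdeg : ∀ i, (p i).natDegree ≤ N) (α : L) (n : ℕ) :
    PowerSeries.coeff n
        ((fam N p).eval₂ (PowerSeries.map φ) (PowerSeries.C α * PowerSeries.X)) =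
      ∑ j ∈ Finset.range (n + 1), φ ((p (n - j)).coeff j) * α ^ j := by
  have hterm (j : ℕ) : PowerSeries.coeff n (PowerSeries.map φ ((fam N p).coeff j) *
      (PowerSeries.C α * PowerSeries.X) ^ j) =
        if j ≤ n then φ ((p (n - j)).coeff j) * α ^ j else 0 := by
    rw [mul_pow, ← map_pow, ← mul_assoc, PowerSeries.coeff_mul_X_pow', PowerSeries.coeff_mul_C,
      PowerSeries.coeff_map, coeff_fam hdeg, PowerSeries.coeff_mk]
  have hlt : (fam N p).natDegree < N + n + 1 := by
    have := natDegree_fam_le hdeg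
    lia
  rw [eval₂_eq_sum_range' _ hlt, map_sum, Finset.sum_congr rfl fun j _ ↦ hterm j,
    ← Finset.sum_filter]
  refine Finset.sum_congr ?_ fun _ _ ↦ rfl
  ext j
  simp only [Finset.mem_filter, Finset.mem_range]
  lia

end Families

section LinearSubstitution

variable {R : Type*} [CommRing R] {a a' b b' c c' d α : R}

lemma quadratic_eq_zero_of_sq_sub_mul_eq_zero [NoZeroDivisors R] (ha : a ≠ 0)
    (hdisc : b ^ 2 - a * c = 0) (hα : a * α + b = 0) : c + 2 * b * α + a * α ^ 2 = 0 := by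
  refine (mul_eq_zero.1 ?_).resolve_left ha
  linear_combination (a * α + b) * hα - hdisc

lemma cubic_ne_zero_of_homogeneous_ne_zero
    (hne : -a' * b ^ 3 + b' * b ^ 2 * a - c' * b * a ^ 2 + d * a ^ 3 ≠ 0)
    (hα : a * α + b = 0) : d + c' * α + b' * α ^ 2 + a' * α ^ 3 ≠ 0 := by
  contrapose! hne
  obtain rfl : b = -(a * α) := by linear_combination hα
  linear_combination a ^ 3 * hne

end LinearSubstitution

lemma HasConst.orderTop_single_one_sub {L : Type*} [Field L] {w : HahnSeries ℚ L} {e : L}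
    (hw : HasConst w e) (he : e ≠ 0) (α : L) :
    (HahnSeries.single 1 α - w).orderTop = 0 := by
  have hw0 : w.orderTop = 0 := le_antisymm
    (HahnSeries.orderTop_le_of_coeff_ne_zero (by rwa [hw.1]))
    (HahnSeries.le_orderTop_iff_forall.2 fun q hq ↦ hw.2 q (WithTop.coe_lt_coe.1 hq))
  rw [← HahnSeries.orderTop_neg, neg_sub, HahnSeries.orderTop_sub, hw0]
  rw [hw0]
  exact HahnSeries.lt_orderTop_single zero_lt_one

/-- The family `∑ pᵢ(x) tⁱ` is of the third kind: it consists of polynomials of degree at most `3`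
and is congruent to `a₀x² + a₁x³ + 2b₀xt + b₁x²t + c₀t² + c₁xt² + d₁t³` modulo `t⁴`. -/
structure IsThirdKind {A : Type*} [CommRing A] (p : ℕ → Polynomial A)
    (a0 a1 b0 b1 c0 c1 d1 : A) : Prop where
  natDegree_le : ∀ i, (p i).natDegree ≤ 3
  zero : p 0 = C a0 * X ^ 2 + C a1 * X ^ 3
  one : p 1 = 2 * C b0 * X + C b1 * X ^ 2
  two : p 2 = C c0 + C c1 * X
  three : p 3 = C d1

namespace IsThirdKind

variable {A L : Type*} [CommRing A] [Field L] {φ : A →+* L} {p : ℕ → Polynomial A}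
  {a0 a1 b0 b1 c0 c1 d1 : A} {α : L}

lemma orderTop_eval_eq_three (h : IsThirdKind p a0 a1 b0 b1 c0 c1 d1)
    (hquad : φ c0 + 2 * φ b0 * α + φ a0 * α ^ 2 = 0)
    (hcubic : φ d1 + φ c1 * α + φ b1 * α ^ 2 + φ a1 * α ^ 3 ≠ 0) :
    (((fam 3 p).map (Phi φ)).eval (HahnSeries.single 1 α)).orderTop =
      ((3 : ℚ) : WithTop ℚ) := by
  rw [eval_map_Phi]
  refine orderTop_ofPowerSeries_eq_natCast (n := 3) (fun m hm ↦ ?_) ?_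
  · rw [coeff_eval₂_fam φ h.natDegree_le]
    interval_cases m
    · simp [h.zero]
    · simp [Finset.sum_range_succ, h.zero, h.one]
    · simpa [Finset.sum_range_succ, h.zero, h.one, h.two, two_mul] using hquad
  · rw [coeff_eval₂_fam φ h.natDegree_le]
    simpa [Finset.sum_range_succ, h.zero, h.one, h.two, h.three] using hcubic

lemma two_le_orderTop_derivative_eval (h : IsThirdKind p a0 a1 b0 b1 c0 c1 d1)
    (hα : φ a0 * α + φ b0 = 0) :
    ((2 : ℚ) : WithTop ℚ) ≤
      (((fam 3 p).map (Phi φ)).derivative.eval (HahnSeries.single 1 α)).orderTop := by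
  have hdeg (i : ℕ) := natDegree_derivative_le_of_natDegree_le (h.natDegree_le i)
  rw [derivative_map, derivative_fam h.natDegree_le, eval_map_Phi]
  refine natCast_le_orderTop_ofPowerSeries (n := 2) fun m hm ↦ ?_
  rw [coeff_eval₂_fam φ hdeg]
  simp only [coeff_derivative]
  interval_cases m
  · simp [h.zero]
  · have hlin : φ b0 + φ b0 + φ a0 * 2 * α = 0 := by linear_combination 2 * hα
    rw [Finset.sum_range_succ, Finset.sum_range_one]
    simpa [h.zero, h.one, two_mul, one_add_one_eq_two, map_ofNat φ 2] using hlin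

lemma orderTop_coeff_three (h : IsThirdKind p a0 a1 b0 b1 c0 c1 d1) (ha1 : φ a1 ≠ 0) :
    (((fam 3 p).map (Phi φ)).coeff 3).orderTop = 0 := by
  rw [coeff_map, coeff_fam h.natDegree_le, Phi, RingHom.comp_apply]
  refine orderTop_ofPowerSeries_eq_natCast (Γ := ℚ) (n := 0) (by simp) ?_
  simpa [h.zero] using ha1

theorem orderTop_roots (h : IsThirdKind p a0 a1 b0 b1 c0 c1 d1) (h2 : (2 : L) ≠ 0)
    (ha1 : φ a1 ≠ 0) (hα : φ a0 * α + φ b0 = 0)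
    (hquad : φ c0 + 2 * φ b0 * α + φ a0 * α ^ 2 = 0)
    (hcubic : φ d1 + φ c1 * α + φ b1 * α ^ 2 + φ a1 * α ^ 3 ≠ 0)
    {u v w c : HahnSeries ℚ L} (hw : (HahnSeries.single 1 α - w).orderTop = 0)
    (hsplit : (fam 3 p).map (Phi φ) = C c * ((X - C u) * (X - C v) * (X - C w))) :
    (HahnSeries.single 1 α - u).orderTop = ((3 / 2 : ℚ) : WithTop ℚ) ∧
      (HahnSeries.single 1 α - v).orderTop = ((3 / 2 : ℚ) : WithTop ℚ) ∧
      (u - v).orderTop = ((3 / 2 : ℚ) : WithTop ℚ) := by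
  have hc : c.orderTop = 0 := by
    have hlead : ((fam 3 p).map (Phi φ)).coeff 3 = c := by
      rw [hsplit, ← mul_assoc, ← mul_assoc, Cubic.C_mul_prod_X_sub_C_eq, Cubic.coeff_eq_a]
    rw [← hlead, h.orderTop_coeff_three ha1]
  have hfactor : (fam 3 p).map (Phi φ) = (C c * (X - C w)) * ((X - C u) * (X - C v)) := by
    rw [hsplit]; ring
  have heval := h.orderTop_eval_eq_three hquad hcubic
  have hderiv := h.two_le_orderTop_derivative_eval hα
  rw [hfactor] at heval hderiv
  refine orderTop_roots_of_orderTop_eval_eq (Q := C c * (X - C w)) h2 (by norm_num) ?_ ?_ ?_ ?_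
  · simp [hc, hw]
  · simp [hc]
  · rw [heval]; norm_num
  · exact (WithTop.coe_lt_coe.2 (by norm_num)).trans_le hderiv

end IsThirdKind

theorem stmt13_general {A L : Type*} [CommRing A] [Field L] (h2 : (2 : L) ≠ 0) (φ : A →+* L)
    (a0 a1 b0 b1 c0 c1 d1 : A) (hb : b0 ^ 2 - a0 * c0 = 0)
    (hnz : φ (a0 * (-a1 * b0 ^ 3 + b1 * b0 ^ 2 * a0 - c1 * b0 * a0 ^ 2 + d1 * a0 ^ 3)) ≠ 0)
    (p : ℕ → Polynomial A) (hp : IsThirdKind p a0 a1 b0 b1 c0 c1 d1)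
    (e : L) (he : φ a1 * e + φ a0 = 0)
    (u v w : HahnSeries ℚ L) (hw : HasConst w e) (c : HahnSeries ℚ L)
    (hsplit : (fam 3 p).map (Phi φ) = C c * ((X - C u) * (X - C v) * (X - C w))) :
    u.coeff 1 = -φ b0 / φ a0 ∧ v.coeff 1 = -φ b0 / φ a0 ∧
      (u - v).order = 3 / 2 ∧ ⌊(2 : ℚ) * (u - v).order⌋ = 3 := by
  simp only [map_mul, map_add, map_sub, map_neg, map_pow] at hnz
  have ha0 : φ a0 ≠ 0 := left_ne_zero_of_mul hnz
  have ha1 : φ a1 ≠ 0 := fun h ↦ ha0 (by simpa [h] using he)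
  have he0 : e ≠ 0 := fun h ↦ ha0 (by simpa [h] using he)
  have hα : φ a0 * (-φ b0 / φ a0) + φ b0 = 0 := by
    rw [mul_div_cancel₀ _ ha0, neg_add_cancel]
  have hdisc : φ b0 ^ 2 - φ a0 * φ c0 = 0 := by simpa using congrArg φ hb
  obtain ⟨hu, hv, huv⟩ := hp.orderTop_roots h2 ha1 hα
    (quadratic_eq_zero_of_sq_sub_mul_eq_zero ha0 hdisc hα)
    (cubic_ne_zero_of_homogeneous_ne_zero (right_ne_zero_of_mul hnz) hα)
    (hw.orderTop_single_one_sub he0 _) hsplit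
  have hone : ((1 : ℚ) : WithTop ℚ) < ((3 / 2 : ℚ) : WithTop ℚ) :=
    WithTop.coe_lt_coe.2 (by norm_num)
  have horder := order_eq_of_orderTop_eq huv
  refine ⟨?_, ?_, horder, by norm_num [horder]⟩
  · rw [← coeff_eq_of_lt_orderTop_sub (hone.trans_eq hu.symm), HahnSeries.coeff_single_same]
  · rw [← coeff_eq_of_lt_orderTop_sub (hone.trans_eq hv.symm), HahnSeries.coeff_single_same]

/-- **Proposition 4.5.**  For a family of the third kind
`F(x,t) = a₀x² + a₁x³ + 2b₀xt + b₁x²t + c₀t² + c₁xt² + d₁t³ + O(t⁴)` with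
`b₀² − a₀c₀ = 0`, `a₀(−a₁b₀³ + b₁b₀²a₀ − c₁b₀a₀² + d₁a₀³) ≠ 0` and `Δ_{A[[t]]}(F) ≠ 0`,
the type of `F` with respect to the factor `f = x` of `F_0 = x²(a₀ + a₁x)` is `τ = 3`:
the two `t`-roots `u, v` of `F` with constant term `0` have the form
`αt + α_{1,2}t^{3/2} + ⋯` with `α = −b₀/a₀` and `α₁ ≠ α₂`, so `ord(u − v) = 3/2`,
`m = 3/2` and `τ = ⌊2 · (3/2)⌋ = 3`. -/
theorem stmt13 {A L : Type*} [CommRing A] [IsDomain A]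
    [Field L] [IsAlgClosed L] [CharZero L]
    (φ : A →+* L) (hφ : Function.Injective φ)
    (a0 a1 b0 b1 c0 c1 d1 : A)
    (hb : b0 ^ 2 - a0 * c0 = 0)
    (hnz : a0 * (-a1 * b0 ^ 3 + b1 * b0 ^ 2 * a0 - c1 * b0 * a0 ^ 2 + d1 * a0 ^ 3) ≠ 0)
    (p : ℕ → Polynomial A) (hdeg : ∀ i, (p i).natDegree ≤ 3)
    (hp0 : p 0 = C a0 * X ^ 2 + C a1 * X ^ 3)
    (hp1 : p 1 = 2 * C b0 * X + C b1 * X ^ 2)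
    (hp2 : p 2 = C c0 + C c1 * X)
    (hp3 : p 3 = C d1)
    (e : L) (he : φ a1 * e + φ a0 = 0)
    (u v w : HahnSeries ℚ L) (hu : HasConst u 0) (hv : HasConst v 0)
    (hw : HasConst w e)
    (c : HahnSeries ℚ L)
    (hsplit : (fam 3 p).map (Phi φ) =
      C c * ((X - C u) * (X - C v) * (X - C w)))
    (hΔ : rootsSep ![u, v, w] ≠ 0) :
    u.coeff 1 = -φ b0 / φ a0 ∧ v.coeff 1 = -φ b0 / φ a0 ∧
      (u - v).order = 3 / 2 ∧ ⌊(2 : ℚ) * (u - v).order⌋ = 3 :=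
  stmt13_general two_ne_zero φ a0 a1 b0 b1 c0 c1 d1 hb ((map_ne_zero_iff φ hφ).2 hnz) p
    ⟨hdeg, hp0, hp1, hp2, hp3⟩ e he u v w hw c hsplit
end
end
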